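/- Let p_D and p_θ be continuously differentiable, strictly positive probability densities on ℝ^d with ½ ∫ p_D(v)‖∇ log p_θ(v) − ∇ log p_D(v)‖₂² dv < ∞. Let F be the class of continuously differentiable f: ℝ^d → ℝ^d such that p_D(v)·f(v) → 0 as ‖v‖ → ∞, ∇·(p_D f) is Lebesgue-integrable, and ∫ p_D‖f‖₂² < ∞, and suppose f* := ∇ log p_θ − ∇ log p_D belongs to F. Then sup_{f ∈ F} ∫ p_D(v) [⟨∇ log p_θ(v), f(v)⟩ + tr(Df(v)) − ½‖f(v)‖₂²] dv = ½ ∫ p_D(v)‖∇ log p_θ(v) − ∇ log p_D(v)‖₂² dv, i.e. the maximum form D_F^m(p_D‖p_θ) equals the Fisher divergence D_F(p_D‖p_θ), and the supremum is attained at f = f*. -/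

import Mathlib

open MeasureTheory Filter Topology
open scoped RealInnerProductSpace

/-- The divergence `∇·f` of a vector field `f : ℝ^d → ℝ^d`, i.e. the trace of its Jacobian. -/
noncomputable def vdiv {d : ℕ} (f : EuclideanSpace ℝ (Fin d) → EuclideanSpace ℝ (Fin d))
    (x : EuclideanSpace ℝ (Fin d)) : ℝ :=
  LinearMap.trace ℝ (EuclideanSpace ℝ (Fin d)) (fderiv ℝ f x).toLinearMap

/-- The class `F` of admissible test functions: `C¹` vector fields `f` with `p_D·f → 0` at
infinity, `∇·(p_D f)` Lebesgue-integrable, and `∫ p_D ‖f‖² < ∞`. -/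
noncomputable def memF {d : ℕ} (pD : EuclideanSpace ℝ (Fin d) → ℝ)
    (f : EuclideanSpace ℝ (Fin d) → EuclideanSpace ℝ (Fin d)) : Prop :=
  ContDiff ℝ 1 f ∧
    Tendsto (fun v => pD v • f v) (cocompact (EuclideanSpace ℝ (Fin d))) (𝓝 0) ∧
    Integrable (vdiv fun v => pD v • f v) ∧ Integrable (fun v => pD v * ‖f v‖ ^ 2)

/-- The objective `J(f) = ∫ p_D(v) [⟨∇ log p_θ(v), f(v)⟩ + tr(Df(v)) − ½‖f(v)‖²] dv`. -/
noncomputable def Jobj {d : ℕ} (pD pθ : EuclideanSpace ℝ (Fin d) → ℝ)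
    (f : EuclideanSpace ℝ (Fin d) → EuclideanSpace ℝ (Fin d)) : ℝ :=
  ∫ v, pD v * (⟪gradient (fun w => Real.log (pθ w)) v, f v⟫ + vdiv f v
    - (1 / 2) * ‖f v‖ ^ 2)

lemma vdiv_eq_sum {d : ℕ} (f : EuclideanSpace ℝ (Fin d) → EuclideanSpace ℝ (Fin d))
    (x : EuclideanSpace ℝ (Fin d)) :
    vdiv f x = ∑ i, (fderiv ℝ f x (EuclideanSpace.single i 1)) i := by
  unfold vdiv
  rw [LinearMap.trace_eq_sum_inner _ (EuclideanSpace.basisFun (Fin d) ℝ)]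
  simp [EuclideanSpace.inner_single_left]

lemma clm_apply_eq_sum {d : ℕ} (L : EuclideanSpace ℝ (Fin d) →L[ℝ] ℝ)
    (x : EuclideanSpace ℝ (Fin d)) :
    L x = ∑ i, L (EuclideanSpace.single i 1) * x i := by
  conv_lhs => rw [← (EuclideanSpace.basisFun (Fin d) ℝ).sum_repr x]
  simp [map_sum, mul_comm]

lemma vdiv_smul {d : ℕ} (p : EuclideanSpace ℝ (Fin d) → ℝ)
    (f : EuclideanSpace ℝ (Fin d) → EuclideanSpace ℝ (Fin d)) (x : EuclideanSpace ℝ (Fin d))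
    (hp : DifferentiableAt ℝ p x) (hf : DifferentiableAt ℝ f x) :
    vdiv (fun v => p v • f v) x = p x * vdiv f x + fderiv ℝ p x (f x) := by
  rw [vdiv_eq_sum, vdiv_eq_sum, clm_apply_eq_sum, fderiv_fun_smul hp hf, Finset.mul_sum,
    ← Finset.sum_add_distrib]
  simp

lemma fderiv_coord {d : ℕ} (g : EuclideanSpace ℝ (Fin d) → EuclideanSpace ℝ (Fin d))
    (hg : Differentiable ℝ g) (i : Fin d) (x w : EuclideanSpace ℝ (Fin d)) :
    fderiv ℝ (fun v => g v i) x w = (fderiv ℝ g x w) i := by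
  have h := ((EuclideanSpace.proj (𝕜 := ℝ) i).hasFDerivAt (x := g x)).comp x (hg x).hasFDerivAt
  have h2 : HasFDerivAt (fun v => g v i)
    ((EuclideanSpace.proj (𝕜 := ℝ) i).comp (fderiv ℝ g x)) x := h
  rw [h2.fderiv]
  simp

lemma ibp {d : ℕ} (χ : EuclideanSpace ℝ (Fin d) → ℝ)
    (g : EuclideanSpace ℝ (Fin d) → EuclideanSpace ℝ (Fin d))
    (hχ : ContDiff ℝ 1 χ) (hc : HasCompactSupport χ) (hg : ContDiff ℝ 1 g) :
    ∫ v, χ v * vdiv g v = - ∫ v, fderiv ℝ χ v (g v) := by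
  have hgd : Differentiable ℝ g := hg.differentiable one_ne_zero
  have hχd : Differentiable ℝ χ := hχ.differentiable one_ne_zero
  have hgi : ∀ i, Differentiable ℝ (fun v => g v i) := fun i => by fun_prop
  have cg : Continuous (fderiv ℝ g) := hg.continuous_fderiv one_ne_zero
  have cχ : Continuous (fderiv ℝ χ) := hχ.continuous_fderiv one_ne_zero
  have cχ0 := hχ.continuous
  have cg0 := hg.continuous
  have I1 : ∀ i, Integrable (fun v => fderiv ℝ χ v (EuclideanSpace.single i 1) * g v i) :=
    fun i => Continuous.integrable_of_hasCompactSupport (by fun_prop)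
      ((hc.fderiv_apply (𝕜 := ℝ) (EuclideanSpace.single i 1)).mul_right)
  have I2 : ∀ i, Integrable (fun v => χ v *
      fderiv ℝ (fun v => g v i) v (EuclideanSpace.single i 1)) := fun i => by
    simp only [fderiv_coord g hgd]
    exact Continuous.integrable_of_hasCompactSupport (by fun_prop) hc.mul_right
  have I3 : ∀ i, Integrable (fun v => χ v * g v i) := fun i =>
    Continuous.integrable_of_hasCompactSupport (by fun_prop) hc.mul_right
  have key := fun i => integral_mul_fderiv_eq_neg_fderiv_mul_of_integrable (I1 i) (I2 i) (I3 i)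
    (fun x _ => hχd x) (fun x _ => hgi i x)
  calc ∫ v, χ v * vdiv g v
      = ∫ v, ∑ i, χ v * fderiv ℝ (fun v => g v i) v (EuclideanSpace.single i 1) := by
        simp only [fderiv_coord g hgd, vdiv_eq_sum, Finset.mul_sum]
    _ = ∑ i, ∫ v, χ v * fderiv ℝ (fun v => g v i) v (EuclideanSpace.single i 1) :=
        integral_finsetSum _ (fun i _ => I2 i)
    _ = - ∑ i, ∫ v, fderiv ℝ χ v (EuclideanSpace.single i 1) * g v i := by
        rw [← Finset.sum_neg_distrib]; exact Finset.sum_congr rfl fun i _ => key i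
    _ = - ∫ v, fderiv ℝ χ v (g v) := by
        rw [← integral_finsetSum _ (fun i _ => I1 i)]
        congr 2; ext v; rw [← clm_apply_eq_sum]

lemma integral_vdiv_eq_zero {d : ℕ} (g : EuclideanSpace ℝ (Fin d) → EuclideanSpace ℝ (Fin d))
    (hg : ContDiff ℝ 1 g) (hi : Integrable g) (hdiv : Integrable (vdiv g)) :
    ∫ v, vdiv g v = 0 := by
  let φ : ContDiffBump (0 : EuclideanSpace ℝ (Fin d)) := ⟨1, 2, one_pos, one_lt_two⟩
  have hφ : ContDiff ℝ 1 φ := φ.contDiff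
  obtain ⟨C, hC⟩ := (φ.hasCompactSupport.fderiv (𝕜 := ℝ)).exists_bound_of_continuous
    (hφ.continuous_fderiv one_ne_zero)
  let c : ℕ → ℝ := fun n => 1 / ((n : ℝ) + 1)
  have hcpos : ∀ n, 0 < c n := fun n => by positivity
  have hc0 : Tendsto c atTop (𝓝 0) := tendsto_one_div_add_atTop_nhds_zero_nat
  have key : ∀ n, ∫ v, φ (c n • v) * vdiv g v = - ∫ v, c n * fderiv ℝ φ (c n • v) (g v) := by
    intro n
    have h1 : ContDiff ℝ 1 (fun v => φ (c n • v)) :=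
      hφ.comp (contDiff_const_smul (c n))
    have h2 : HasCompactSupport (fun v => φ (c n • v)) :=
      φ.hasCompactSupport.comp_smul (hcpos n).ne'
    rw [ibp _ g h1 h2 hg]
    congr 2; ext v
    rw [fderiv_comp_smul (f := φ)]
    simp
  have L1 : Tendsto (fun n => ∫ v, φ (c n • v) * vdiv g v) atTop (𝓝 (∫ v, vdiv g v)) := by
    refine tendsto_integral_of_dominated_convergence (fun v => ‖vdiv g v‖) ?_ hdiv.norm ?_ ?_
    · intro n
      exact (φ.continuous.comp (continuous_const_smul (c n))).aestronglyMeasurable.mul hdiv.1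
    · refine fun n => Eventually.of_forall fun v => ?_
      rw [norm_mul, Real.norm_of_nonneg φ.nonneg]
      exact mul_le_of_le_one_left (norm_nonneg _) φ.le_one
    · refine Eventually.of_forall fun v => ?_
      have h : Tendsto (fun n => c n • v) atTop (𝓝 0) := by simpa using hc0.smul_const v
      have h' : Tendsto (fun n => φ (c n • v)) atTop (𝓝 (φ 0)) :=
        (φ.continuous.tendsto 0).comp h
      have h0 : φ 0 = 1 := φ.one_of_mem_closedBall (by simp [φ])
      rw [h0] at h'
      simpa using h'.mul_const (vdiv g v)
  have L2 : Tendsto (fun n => ∫ v, φ (c n • v) * vdiv g v) atTop (𝓝 0) := by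
    refine squeeze_zero_norm (a := fun n => c n * (C * ∫ v, ‖g v‖)) ?_ (by
      simpa using hc0.mul_const _)
    intro n
    rw [key, norm_neg, integral_const_mul, norm_mul, Real.norm_of_nonneg (hcpos n).le,
      ← integral_const_mul]
    refine mul_le_mul_of_nonneg_left ?_ (hcpos n).le
    refine norm_integral_le_of_norm_le (hi.norm.const_mul C) (Eventually.of_forall fun v => ?_)
    exact ((fderiv ℝ φ (c n • v)).le_opNorm _).trans
      (mul_le_mul_of_nonneg_right (hC _) (norm_nonneg _))
  exact tendsto_nhds_unique L1 L2

lemma smul_inner_gradient_log {d : ℕ} (p : EuclideanSpace ℝ (Fin d) → ℝ)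
    (hp : Differentiable ℝ p) (hpos : ∀ v, 0 < p v) (v w : EuclideanSpace ℝ (Fin d)) :
    p v * ⟪gradient (fun w => Real.log (p w)) v, w⟫ = fderiv ℝ p v w := by
  rw [← InnerProductSpace.toDual_apply_apply (𝕜 := ℝ), toDual_gradient,
    ((hp v).hasFDerivAt.log (hpos v).ne').fderiv]
  simp [mul_inv_cancel_left₀ (hpos v).ne']

lemma Jobj_eq {d : ℕ} (pD pθ : EuclideanSpace ℝ (Fin d) → ℝ)
    (hD : ContDiff ℝ 1 pD) (hDpos : ∀ v, 0 < pD v) (hDint : Integrable pD)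
    (s : EuclideanSpace ℝ (Fin d) → EuclideanSpace ℝ (Fin d))
    (hs : s = fun v =>
      gradient (fun w => Real.log (pθ w)) v - gradient (fun w => Real.log (pD w)) v)
    (hsF : memF pD s) (f : EuclideanSpace ℝ (Fin d) → EuclideanSpace ℝ (Fin d))
    (hf : memF pD f) :
    Integrable (fun v => pD v * (⟪s v, f v⟫ - (1 / 2) * ‖f v‖ ^ 2)) ∧
    Jobj pD pθ f = ∫ v, pD v * (⟪s v, f v⟫ - (1 / 2) * ‖f v‖ ^ 2) := by
  obtain ⟨f1, -, f3, f4⟩ := hf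
  obtain ⟨s1, -, -, s4⟩ := hsF
  have cD := hD.continuous
  have cf := f1.continuous
  have cs := s1.continuous
  have hg : ContDiff ℝ 1 (fun v => pD v • f v) := hD.smul f1
  have hgi : Integrable (fun v => pD v • f v) := by
    refine (hDint.add f4).mono' hg.continuous.aestronglyMeasurable
      (Eventually.of_forall fun v => ?_)
    simp only [Pi.add_apply]
    rw [norm_smul, Real.norm_of_nonneg (hDpos v).le]
    nlinarith [hDpos v, mul_nonneg (hDpos v).le (sq_nonneg (‖f v‖ - 1)),
      mul_nonneg (hDpos v).le (sq_nonneg (‖f v‖))]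
  have h0 := integral_vdiv_eq_zero _ hg hgi f3
  have hsf : Integrable (fun v => pD v * ⟪s v, f v⟫) := by
    refine (s4.add f4).mono' (by fun_prop) (Eventually.of_forall fun v => ?_)
    simp only [Pi.add_apply]
    rw [norm_mul, Real.norm_of_nonneg (hDpos v).le, ← mul_add]
    refine mul_le_mul_of_nonneg_left ?_ (hDpos v).le
    refine (norm_inner_le_norm (𝕜 := ℝ) _ _).trans ?_
    nlinarith [sq_nonneg (‖s v‖ - ‖f v‖), sq_nonneg (‖s v‖), sq_nonneg (‖f v‖)]
  have hI : Integrable (fun v => pD v * (⟪s v, f v⟫ - (1 / 2) * ‖f v‖ ^ 2)) := by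
    refine (hsf.sub (f4.const_mul (1 / 2))).congr (Eventually.of_forall fun v => ?_)
    simp only [Pi.sub_apply]; ring
  refine ⟨hI, ?_⟩
  have hpt : ∀ v, pD v * (⟪gradient (fun w => Real.log (pθ w)) v, f v⟫ + vdiv f v
      - (1 / 2) * ‖f v‖ ^ 2) = pD v * (⟪s v, f v⟫ - (1 / 2) * ‖f v‖ ^ 2)
        + vdiv (fun v => pD v • f v) v := by
    intro v
    rw [vdiv_smul pD f v (hD.differentiable one_ne_zero v) (f1.differentiable one_ne_zero v),
      ← smul_inner_gradient_log pD (hD.differentiable one_ne_zero) hDpos, hs]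
    simp only [inner_sub_left]
    ring
  unfold Jobj
  simp only [hpt]
  rw [integral_add hI f3, h0, add_zero]

/-- **The maximum form of the Fisher divergence equals the Fisher divergence.** If
`f* = ∇ log p_θ − ∇ log p_D` belongs to the class `F`, then
`sup_{f ∈ F} J(f) = ½ ∫ p_D ‖∇ log p_θ − ∇ log p_D‖²` and the supremum is attained at `f*`. -/
theorem maxFisher_eq_fisher {d : ℕ} (pD pθ : EuclideanSpace ℝ (Fin d) → ℝ)
    (hD : ContDiff ℝ 1 pD) (hDpos : ∀ v, 0 < pD v) (hDnorm : ∫ v, pD v = 1)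
    (hθ : ContDiff ℝ 1 pθ) (hθpos : ∀ v, 0 < pθ v) (hθnorm : ∫ v, pθ v = 1)
    (hfin : Integrable (fun v => pD v *
      ‖gradient (fun w => Real.log (pθ w)) v - gradient (fun w => Real.log (pD w)) v‖ ^ 2))
    (hstar : memF pD (fun v =>
      gradient (fun w => Real.log (pθ w)) v - gradient (fun w => Real.log (pD w)) v)) :
    Jobj pD pθ (fun v =>
        gradient (fun w => Real.log (pθ w)) v - gradient (fun w => Real.log (pD w)) v)
      = (1 / 2) * ∫ v, pD v *
          ‖gradient (fun w => Real.log (pθ w)) v - gradient (fun w => Real.log (pD w)) v‖ ^ 2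
    ∧ IsGreatest {r : ℝ | ∃ f, memF pD f ∧ r = Jobj pD pθ f}
        ((1 / 2) * ∫ v, pD v *
          ‖gradient (fun w => Real.log (pθ w)) v
            - gradient (fun w => Real.log (pD w)) v‖ ^ 2) := by
  have hDint : Integrable pD := by
    by_contra h
    rw [integral_undef h] at hDnorm
    exact zero_ne_one hDnorm
  have e := fun f hf => Jobj_eq pD pθ hD hDpos hDint _ rfl hstar f hf
  have h1 : Jobj pD pθ (fun v =>
        gradient (fun w => Real.log (pθ w)) v - gradient (fun w => Real.log (pD w)) v)
      = (1 / 2) * ∫ v, pD v *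
          ‖gradient (fun w => Real.log (pθ w)) v - gradient (fun w => Real.log (pD w)) v‖ ^ 2 := by
    rw [(e _ hstar).2, ← integral_const_mul]
    congr 1; ext v
    rw [real_inner_self_eq_norm_sq]
    ring
  refine ⟨h1, ⟨_, hstar, h1.symm⟩, ?_⟩
  rintro r ⟨f, hf, rfl⟩
  rw [(e f hf).2, ← integral_const_mul]
  refine integral_mono (e f hf).1 (hfin.const_mul _) fun v => ?_
  have h2 := norm_sub_sq_real
    (gradient (fun w => Real.log (pθ w)) v - gradient (fun w => Real.log (pD w)) v) (f v)
  have h3 := sq_nonneg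
    ‖gradient (fun w => Real.log (pθ w)) v - gradient (fun w => Real.log (pD w)) v - f v‖
  rw [h2] at h3
  have h4 := mul_nonneg (hDpos v).le h3
  dsimp only
  linarith
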